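/- arXiv:1411.4058 — 3 statements merged into one kernel-verified Lean document; each statement's English description precedes it below -/
import Mathlib

section
/- For integers k > ℓ ≥ 1, with i = i(k,ℓ), and positive integers e_1,...,e_t, the ordered Ramsey number satisfies OR(P_{e_1}^{k,ℓ},...,P_{e_t}^{k,ℓ}) = (k−ℓ)·OR(P_{e_1}^{i,i−1},...,P_{e_t}^{i,i−1}) + ℓ − (k−ℓ)(i−1). -/
/-- An ordered hypergraph with vertex set `{1, …, n}` (with its natural order)
and edges given as finite sets of vertices. -/
structure OrderedHypergraph where
  n : ℕ
  edges : Finset (Finset ℕ)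

/-- An ordered hypergraph `G` is contained in an ordered hypergraph `H` if there is an
injective, order-preserving map from the vertices of `G` to the vertices of `H` such that
edges of `G` map to edges of `H`. -/
def OrderedHypergraph.Contains (H G : OrderedHypergraph) : Prop :=
  ∃ f : ℕ → ℕ, StrictMono f ∧ (∀ v ∈ Finset.Icc 1 G.n, f v ∈ Finset.Icc 1 H.n) ∧
    ∀ A ∈ G.edges, A.image f ∈ H.edges

/-- The complete `k`-uniform ordered hypergraph `K_N^k` on the vertex set `{1, …, N}`. -/
def completeHG (k N : ℕ) : OrderedHypergraph :=
  ⟨N, Finset.powersetCard k (Finset.Icc 1 N)⟩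

/-- The `i`-colored subgraph of `K_N^k` under the coloring `c`. -/
def coloredSubgraph (k N : ℕ) {t : ℕ} (c : Finset ℕ → Fin t) (i : Fin t) : OrderedHypergraph :=
  ⟨N, (Finset.powersetCard k (Finset.Icc 1 N)).filter fun A => c A = i⟩

/-- The ordered Ramsey number `OR(G 0, …, G (t-1))` of `k`-uniform ordered hypergraphs:
the minimum `N` such that every `t`-coloring of the edges of `K_N^k` contains, for some
color `i`, a copy of `G i` in the `i`-colored subgraph. -/
noncomputable def ORnum (k : ℕ) {t : ℕ} (G : Fin t → OrderedHypergraph) : ℕ :=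
  sInf {N | ∀ c : Finset ℕ → Fin t, ∃ i, (coloredSubgraph k N c i).Contains (G i)}

/-- The `(k,ℓ)`-path `P_e^{k,ℓ}` with `e` edges: the ordered `k`-uniform hypergraph on
vertex set `{1, …, e(k-ℓ)+ℓ}` with edges `A_r = {(r-1)(k-ℓ)+1, …, (r-1)(k-ℓ)+k}`. -/
def loosePath (k l e : ℕ) : OrderedHypergraph :=
  ⟨e * (k - l) + l,
    (Finset.range e).image fun r => Finset.Icc (r * (k - l) + 1) (r * (k - l) + k)⟩

/-!
Write `d = k - ℓ` and number vertices from `0`. The intersection number `i = p + 2` is characterised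
by `k = (p + 1) d + a + 1` with `0 ≤ a < d`, so that an edge of `P_e^{k,ℓ}` consists of `i - 1` full
blocks of length `d` followed by the first `a + 1` vertices of one more block. Consequently
replacing each vertex of a tight `i`-uniform path by a block turns it into a `(k,ℓ)`-path, and
keeping only the vertices with index congruent to `a` modulo `d` turns a `(k,ℓ)`-path into a tight
`i`-uniform path. Both operations act on enumerations of vertex sets, so colorings can be pulled
back along them. If `x` is the largest vertex of a tight path and `y` that of the corresponding
`(k,ℓ)`-path, then `y = d x + a`, and the two Ramsey numbers minus `1` obey the same relation.

That the Ramsey numbers exist has to be shown for tight paths only, by induction on the uniformity: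
label each `(i - 1)`-set by the lengths of the monochromatic tight `i`-uniform paths ending in it,
and apply the induction hypothesis for paths with two edges to this labelling.
-/

section ForcesPath

variable {C : Type*}

/-- The vertex set `{f a, …, f (a + k - 1)}`. If the strictly increasing `f` enumerates the vertices
of a path, its edges have this form. -/
def window (f : ℕ → ℕ) (a k : ℕ) : Finset ℕ :=
  (Finset.range k).image fun v => f (a + v)

lemma window_congr {f g : ℕ → ℕ} {a b k : ℕ} (h : ∀ v < k, f (a + v) = g (b + v)) :
    window f a k = window g b k :=
  Finset.image_congr fun v hv => h v (Finset.mem_range.mp hv)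

lemma nth_window {f : ℕ → ℕ} (hf : StrictMono f) (a : ℕ) {k v : ℕ} (hv : v < k) :
    Nat.nth (· ∈ window f a k) v = f (a + v) := by
  have hshift : StrictMono fun u => f (a + u) := hf.comp (strictMono_id.const_add a)
  have hmem (u : ℕ) : f (a + u) ∈ window f a k ↔ u < k := by
    simp [window, hf.injective.eq_iff]
  have hnth : Nat.nth (fun u => f (a + u) ∈ window f a k) v = v := by
    simp only [hmem]
    have hcount : Nat.count (· < k) v = v := Nat.count_iff_forall.mpr fun u hu => hu.trans hv
    simpa only [hcount] using Nat.nth_count (p := (· < k)) hv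
  have hcard : (window f a k).card = k := by
    rw [window, Finset.card_image_of_injective _ hshift.injective, Finset.card_range]
  rw [← Nat.nth_comp_of_strictMono (p := (· ∈ window f a k)) hshift, hnth]
  · simp only [window, Finset.mem_image]
    rintro _ ⟨u, -, rfl⟩
    exact ⟨u, rfl⟩
  · intro hfin
    have : hfin.toFinset = window f a k := by ext; simp
    rwa [this, hcard]

/-- `N` vertices force a monochromatic path: every coloring of sets of vertices admits a color `j`
and a path with `e j` edges of color `j`, of uniformity `l + d` and with consecutive edges sharing
`l` vertices. Vertices are numbered from `0`, the host being `{0, …, N - 1}`. -/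
def ForcesPath (l d : ℕ) (e : C → ℕ) (N : ℕ) : Prop :=
  ∀ c : Finset ℕ → C, ∃ j, ∃ f : ℕ → ℕ, StrictMono f ∧ (∀ v < e j * d + l, f v < N) ∧
    ∀ r < e j, c (window f (r * d) (l + d)) = j

/-! ### Renumbering vertices from zero -/

lemma image_Icc_succ_eq {f h : ℕ → ℕ} (hfh : ∀ v, f (v + 1) = h v + 1) (a k : ℕ) :
    (Finset.Icc (a + 1) (a + k)).image f = (window h a k).image Nat.succ := by
  have : Finset.Icc (a + 1) (a + k) = (Finset.range k).image fun v => a + v + 1 := by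
    ext x
    simp only [Finset.mem_Icc, Finset.mem_image, Finset.mem_range]
    exact ⟨fun hx => ⟨x - (a + 1), by omega⟩, by omega⟩
  simp only [this, window, Finset.image_image, Function.comp_def, hfh]

lemma exists_strictMono_succ_eq {h : ℕ → ℕ} (hh : StrictMono h) :
    ∃ f : ℕ → ℕ, StrictMono f ∧ ∀ v, f (v + 1) = h v + 1 := by
  refine ⟨fun v => v.casesOn 0 fun u => h u + 1, strictMono_nat_of_lt_succ ?_, fun _ => rfl⟩
  rintro (_ | v)
  · exact Nat.succ_pos _
  · exact Nat.succ_lt_succ (hh v.lt_succ_self)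

lemma contains_loosePath_iff (l d e N : ℕ) {t : ℕ} (c : Finset ℕ → Fin t) (j : Fin t) :
    (coloredSubgraph (l + d) N c j).Contains (loosePath (l + d) l e) ↔
      ∃ h : ℕ → ℕ, StrictMono h ∧ (∀ v < e * d + l, h v < N) ∧
        ∀ r < e, c ((window h (r * d) (l + d)).image Nat.succ) = j := by
  simp only [OrderedHypergraph.Contains, coloredSubgraph, loosePath, Nat.add_sub_cancel_left,
    Finset.forall_mem_image, Finset.mem_range, Finset.mem_filter, Finset.mem_powersetCard]
  constructor
  · rintro ⟨f, hf, hvert, hedge⟩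
    have hpos (v : ℕ) : 1 ≤ f (v + 1) := (Nat.succ_pos v).trans_le (hf.id_le (v + 1))
    have hsucc (v : ℕ) : f (v + 1) = f (v + 1) - 1 + 1 := (Nat.sub_add_cancel (hpos v)).symm
    refine ⟨fun v => f (v + 1) - 1, fun u v huv => ?_, fun v hv => ?_, fun r hr => ?_⟩
    · exact Nat.sub_lt_sub_right (hpos u) (hf (Nat.succ_lt_succ huv))
    · have hv' : v + 1 ∈ Finset.Icc 1 (e * d + l) := Finset.mem_Icc.mpr ⟨v.succ_pos, hv⟩
      exact Nat.sub_one_lt_of_le (hpos v) (Finset.mem_Icc.mp (hvert _ hv')).2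
    · rw [← image_Icc_succ_eq hsucc]
      exact (hedge hr).2
  · rintro ⟨h, hh, hvert, hedge⟩
    obtain ⟨f, hf, hfh⟩ := exists_strictMono_succ_eq hh
    have hvert' : ∀ v ∈ Finset.Icc 1 (e * d + l), f v ∈ Finset.Icc 1 N := by
      rintro (_ | v) hv <;> rw [Finset.mem_Icc] at hv
      · omega
      · rw [hfh, Finset.mem_Icc]
        exact ⟨Nat.succ_pos _, hvert v hv.2⟩
    refine ⟨f, hf, hvert', fun r hr => ⟨⟨?_, ?_⟩, ?_⟩⟩
    · refine Finset.image_subset_iff.mpr fun v hv => hvert' v ?_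
      have : (r + 1) * d ≤ e * d := Nat.mul_le_mul_right d hr
      rw [Finset.mem_Icc] at hv ⊢
      rw [add_mul] at this
      omega
    · rw [Finset.card_image_of_injective _ hf.injective, Nat.card_Icc]
      omega
    · rw [image_Icc_succ_eq hfh]
      exact hedge r hr

lemma ORnum_loosePath_eq_sInf (l d : ℕ) {t : ℕ} (e : Fin t → ℕ) :
    ORnum (l + d) (fun j => loosePath (l + d) l (e j)) = sInf {N | ForcesPath l d e N} := by
  unfold ORnum ForcesPath
  congr! 3 with N
  rcases isEmpty_or_nonempty (Fin t) with _ | _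
  · exact iff_of_true (fun c => isEmptyElim (c ∅)) (fun c => isEmptyElim (c ∅))
  · simp only [contains_loosePath_iff]
    exact ((Finset.image_injective Nat.succ_injective).surjective_comp_right.forall
      (p := fun c : Finset ℕ → Fin t => ∃ j, ∃ h : ℕ → ℕ, StrictMono h ∧
        (∀ v < e j * d + l, h v < N) ∧ ∀ r < e j, c (window h (r * d) (l + d)) = j)).symm

/-! ### Existence of the Ramsey numbers of tight paths -/

lemma ForcesPath.of_le {l d N : ℕ} {e e' : C → ℕ} (he : ∀ j, e j ≤ e' j)
    (h : ForcesPath l d e' N) : ForcesPath l d e N := by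
  intro c
  obtain ⟨j, f, hf, hN, hc⟩ := h c
  have : e j * d ≤ e' j * d := Nat.mul_le_mul_right d (he j)
  exact ⟨j, f, hf, fun v hv => hN v (by omega), fun r hr => hc r (hr.trans_le (he j))⟩

lemma forcesPath_zero_one [Fintype C] (e : ℕ) :
    ForcesPath 0 1 (fun _ : C => e) (Fintype.card C * e) := by
  classical
  intro c
  obtain ⟨j, -, hj⟩ := Finset.exists_le_card_fiber_of_mul_le_card_of_maps_to
    (s := Finset.range (Fintype.card C * e)) (t := Finset.univ) (f := fun x => c {x}) (n := e)
    (fun _ _ => Finset.mem_univ _) ⟨c ∅, Finset.mem_univ _⟩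
    (by rw [Finset.card_univ, Finset.card_range])
  -- Beyond the host everything is admitted, so that the enumeration is infinite.
  let p (x : ℕ) : Prop := c {x} = j ∨ Fintype.card C * e ≤ x
  have hinf : {x | p x}.Infinite := (Set.Ici_infinite _).mono fun x hx => Or.inr hx
  have hlt (v : ℕ) (hv : v < e) : Nat.nth p v < Fintype.card C * e := by
    refine Nat.nth_lt_of_lt_count (hv.trans_le (hj.trans ?_))
    rw [Nat.count_eq_card_filter_range]
    exact Finset.card_le_card (Finset.monotone_filter_right _ fun _ _ => Or.inl)
  refine ⟨j, Nat.nth p, Nat.nth_strictMono hinf, fun v hv => hlt v ?_, fun r hr => ?_⟩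
  · simpa only [mul_one, add_zero] using hv
  · have : window (Nat.nth p) (r * 1) (0 + 1) = {Nat.nth p r} := by simp [window]
    rw [this]
    exact (Nat.nth_mem_of_infinite hinf r).resolve_right (hlt r hr).not_ge

lemma exists_strictMono_glue {α : Type*} [Preorder α] {f g : ℕ → α} (hf : StrictMono f)
    (hg : StrictMono g) {l m : ℕ} (hl : 0 < l) (hgf : ∀ v < l, g (m + v) = f v) :
    ∃ h : ℕ → α, StrictMono h ∧ (∀ v < m + l, h v = g v) ∧ ∀ v, h (m + v) = f v := by
  have hleft (v : ℕ) (hv : v < m + l) : (if v < m then g v else f (v - m)) = g v := by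
    split_ifs with hvm
    · rfl
    · rw [← hgf (v - m) (by omega), Nat.add_sub_cancel' (not_lt.mp hvm)]
  refine ⟨fun v => if v < m then g v else f (v - m), strictMono_nat_of_lt_succ fun v => ?_,
    hleft, fun v => by simp⟩
  rcases lt_or_ge v m with hv | hv
  · simpa only [hleft v (by omega), hleft (v + 1) (by omega)] using hg v.lt_succ_self
  · simpa only [if_neg hv.not_gt, if_neg (Nat.le_succ_of_le hv).not_gt] using hf (by omega)

/-- The set `S` consists of the last `l` vertices of a tight `(l + 1)`-uniform path with `m` edges,
all of color `j`. -/
def EndsTightPath (l : ℕ) (c : Finset ℕ → C) (j : C) (m : ℕ) (S : Finset ℕ) : Prop :=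
  ∃ g : ℕ → ℕ, StrictMono g ∧ (∀ r < m, c (window g r (l + 1)) = j) ∧ window g m l = S

lemma EndsTightPath.extend {l m : ℕ} {c : Finset ℕ → C} {j : C} {f : ℕ → ℕ} (hl : 0 < l)
    (hf : StrictMono f) (hj : c (window f 0 (l + 1)) = j)
    (h : EndsTightPath l c j m (window f 0 l)) :
    EndsTightPath l c j (m + 1) (window f 1 l) := by
  obtain ⟨g, hg, hcg, hgf⟩ := h
  have hoverlap (v : ℕ) (hv : v < l) : g (m + v) = f v := by
    rw [← nth_window hg m hv, hgf, nth_window hf 0 hv, zero_add]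
  obtain ⟨h, hh, hleft, hright⟩ := exists_strictMono_glue hf hg hl hoverlap
  refine ⟨h, hh, fun r hr => ?_, window_congr fun v _ => by rw [add_assoc, hright]⟩
  rcases Nat.lt_succ_iff_lt_or_eq.mp hr with hrm | rfl
  · rw [← hcg r hrm]
    exact congrArg c (window_congr fun v hv => hleft _ (by omega))
  · rw [← hj]
    exact congrArg c (window_congr fun v _ => by rw [hright, zero_add])

lemma ForcesPath.succ_uniformity {l e N : ℕ}
    (h : ForcesPath l 1 (fun _ : C → Set (Fin (e + 1)) => 2) N) :
    ForcesPath (l + 1) 1 (fun _ : C => e) N := by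
  intro c
  obtain ⟨_, f, hf, hN, hlabel⟩ := h fun S j => {m | EndsTightPath (l + 1) c j m S}
  have hsame : ∀ j, ∀ m ≤ e, EndsTightPath (l + 1) c j m (window f 1 (l + 1)) →
      EndsTightPath (l + 1) c j m (window f 0 (l + 1)) := by
    intro j m hm
    have := congrFun ((hlabel 0 two_pos).trans (hlabel 1 one_lt_two).symm) j
    exact (Set.ext_iff.mp this ⟨m, Nat.lt_succ_of_le hm⟩).mpr
  set j := c (window f 0 (l + 2)) with hj
  have hends : ∀ m ≤ e, EndsTightPath (l + 1) c j m (window f 0 (l + 1)) := by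
    intro m
    induction m with
    | zero => exact fun _ => ⟨f, hf, fun r hr => absurd hr r.not_lt_zero, rfl⟩
    | succ m ih => exact fun hm => hsame j _ hm ((ih (by omega)).extend l.succ_pos hf hj.symm)
  obtain ⟨g, hg, hcg, hgf⟩ := hends e le_rfl
  refine ⟨j, g, hg, fun v (hv : v < e * 1 + (l + 1)) => ?_,
    fun r hr => by rw [mul_one]; exact hcg r hr⟩
  calc g v ≤ g (e + l) := hg.monotone (by omega)
    _ = f l := by
      rw [← nth_window hg e l.lt_succ_self, hgf, nth_window hf 0 l.lt_succ_self, zero_add]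
    _ < N := hN l (show l < 2 * 1 + l by omega)

lemma exists_forcesPath_const_tight [Finite C] (l e : ℕ) :
    ∃ N, ForcesPath l 1 (fun _ : C => e) N := by
  induction l generalizing C e with
  | zero =>
    have := Fintype.ofFinite C
    exact ⟨_, forcesPath_zero_one e⟩
  | succ l ih =>
    obtain ⟨N, hN⟩ := ih (C := C → Set (Fin (e + 1))) 2
    exact ⟨N, hN.succ_uniformity⟩

lemma exists_forcesPath_tight [Finite C] (l : ℕ) (e : C → ℕ) : ∃ N, ForcesPath l 1 e N := by
  obtain ⟨b, hb⟩ := (Set.finite_range e).bddAbove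
  obtain ⟨N, hN⟩ := exists_forcesPath_const_tight (C := C) l b
  exact ⟨N, hN.of_le fun j => hb ⟨j, rfl⟩⟩

/-! ### Transport between loose and tight paths -/

lemma ForcesPath.pos {l d N : ℕ} {e : C → ℕ} [Nonempty C] (hl : 0 < l) (h : ForcesPath l d e N) :
    0 < N := by
  obtain ⟨_, f, -, hN, -⟩ := h fun _ => Classical.arbitrary C
  exact (Nat.zero_le _).trans_lt (hN 0 (by omega))

/-- The hypothesis `hedge` says that the `r`-th edge of `T f` is determined by the `r`-th edge of
`f`, in the same way for all `r`; hence colorings can be pulled back along `T`. -/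
lemma ForcesPath.transport {l d l' d' N N' : ℕ} {e : C → ℕ} (T : (ℕ → ℕ) → ℕ → ℕ)
    (hmono : ∀ f, StrictMono f → StrictMono (T f))
    (hedge : ∀ f g r, (∀ v < l + d, g v = f (r * d + v)) →
      ∀ v < l' + d', T g v = T f (r * d' + v))
    (hvert : ∀ f n, StrictMono f → (∀ v < n * d + l, f v < N) → ∀ v < n * d' + l', T f v < N')
    (h : ForcesPath l d e N) : ForcesPath l' d' e N' := by
  intro c
  obtain ⟨j, f, hf, hN, hc⟩ := h fun S => c (window (T (Nat.nth (· ∈ S))) 0 (l' + d'))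
  refine ⟨j, T f, hmono f hf, hvert f (e j) hf hN, fun r hr => ?_⟩
  rw [← hc r hr]
  refine congrArg c (window_congr fun v hv => ?_)
  rw [zero_add, hedge f _ r (fun u hu => nth_window hf (r * d) hu) v hv]

/-- Replaces the `m`-th vertex `x` by the block of the `d` vertices `d x, …, d x + d - 1`. -/
def blowUp (d : ℕ) (f : ℕ → ℕ) (v : ℕ) : ℕ := d * f (v / d) + v % d

/-- Selects the vertices with index congruent to `a` modulo `d`, and maps each to the number of its
block of length `d`, the blocks being shifted so that they start at `a`. -/
def thinOut (d a : ℕ) (f : ℕ → ℕ) (m : ℕ) : ℕ := (f (m * d + a) - a) / d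

lemma strictMono_blowUp {d : ℕ} (hd : 0 < d) {f : ℕ → ℕ} (hf : StrictMono f) :
    StrictMono (blowUp d f) := by
  intro u v huv
  unfold blowUp
  have hu : d * (u / d) + u % d = u := Nat.div_add_mod u d
  have hv : d * (v / d) + v % d = v := Nat.div_add_mod v d
  rcases (Nat.div_le_div_right huv.le : u / d ≤ v / d).eq_or_lt with heq | hlt
  · rw [heq] at hu ⊢
    omega
  · calc d * f (u / d) + u % d < d * (f (u / d) + 1) := by
          rw [mul_add_one]
          exact Nat.add_lt_add_left (Nat.mod_lt u hd) _
      _ ≤ d * f (v / d) := Nat.mul_le_mul_left d (hf hlt)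
      _ ≤ d * f (v / d) + v % d := Nat.le_add_right _ _

lemma strictMono_thinOut {d : ℕ} (hd : 0 < d) (a : ℕ) {f : ℕ → ℕ} (hf : StrictMono f) :
    StrictMono (thinOut d a f) := by
  refine strictMono_nat_of_lt_succ fun m => ?_
  have hstep : d + f (m * d + a) ≤ f ((m + 1) * d + a) := by
    convert hf.add_le_nat d (m * d + a) using 2
    ring
  have ha : a ≤ f (m * d + a) := (Nat.le_add_left _ _).trans (hf.id_le _)
  calc thinOut d a f m < (f (m * d + a) - a + d) / d := by
        rw [Nat.add_div_right _ hd]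
        exact Nat.lt_succ_self _
    _ ≤ thinOut d a f (m + 1) := Nat.div_le_div_right (by omega)

variable {p d a : ℕ} {e : C → ℕ}

lemma ForcesPath.loose_of_tight {m : ℕ} (had : a < d) (h : ForcesPath (p + 1) 1 e (m + 1)) :
    ForcesPath (p * d + a + 1) d e (d * m + a + 1) := by
  have hd : 0 < d := a.zero_le.trans_lt had
  refine h.transport (blowUp d) (fun _ => strictMono_blowUp hd) ?_ ?_
  · intro f g r hgf v hv
    have hdiv : v / d < p + 1 + 1 := by
      rw [Nat.div_lt_iff_lt_mul hd]
      linarith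
    have hshift : (r * d + v) / d = r * 1 + v / d := by
      rw [mul_comm r d, Nat.mul_add_div hd, mul_one]
    rw [blowUp, blowUp, hgf _ hdiv, hshift, Nat.mul_add_mod_self_right]
  · intro f n hf hfm v hv
    have hlast : f (n + p) ≤ m := Nat.lt_succ_iff.mp (hfm (n + p) (by omega))
    calc blowUp d f v ≤ blowUp d f (d * (n + p) + a) :=
          (strictMono_blowUp hd hf).monotone (by linarith)
      _ = d * f (n + p) + a := by
          rw [blowUp, Nat.mul_add_div hd, Nat.div_eq_of_lt had, add_zero, Nat.mul_add_mod,
            Nat.mod_eq_of_lt had]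
      _ < d * m + a + 1 :=
          Nat.lt_succ_of_le (Nat.add_le_add_right (Nat.mul_le_mul_left d hlast) a)

lemma ForcesPath.tight_of_loose {N m : ℕ} (hd : 0 < d) (hN : N ≤ d * m + a)
    (h : ForcesPath (p * d + a + 1) d e N) : ForcesPath (p + 1) 1 e m := by
  refine h.transport (thinOut d a) (fun _ => strictMono_thinOut hd a) ?_ ?_
  · intro f g r hgf v hv
    have hindex : v * d + a < p * d + a + 1 + d := by
      have : v * d ≤ (p + 1) * d := Nat.mul_le_mul_right d (by omega)
      linarith
    have hshift : (r * 1 + v) * d + a = r * d + (v * d + a) := by ring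
    rw [thinOut, thinOut, hgf _ hindex, hshift]
  · intro f n hf hfN v hv
    have hindex : v * d + a < n * d + (p * d + a + 1) := by
      have : v * d ≤ (n + p) * d := Nat.mul_le_mul_right d (by omega)
      linarith
    have ha : a ≤ f (v * d + a) := (Nat.le_add_left _ _).trans (hf.id_le _)
    have hlt : f (v * d + a) < d * m + a := (hfN _ hindex).trans_le hN
    rw [thinOut, Nat.div_lt_iff_lt_mul hd, mul_comm m d]
    omega

lemma isLeast_forcesPath {m : ℕ} (had : a < d)
    (h : IsLeast {M | ForcesPath (p + 1) 1 e M} (m + 1)) :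
    IsLeast {N | ForcesPath (p * d + a + 1) d e N} (d * m + a + 1) := by
  refine ⟨h.1.loose_of_tight had, fun N hN => ?_⟩
  by_contra! hlt
  have : ForcesPath (p + 1) 1 e m :=
    ForcesPath.tight_of_loose (a.zero_le.trans_lt had) (Nat.lt_succ_iff.mp hlt) hN
  exact absurd (h.2 this) (by omega)

end ForcesPath

lemma exists_decomposition_of_intersectionNumber {k l i : ℕ} (hlk : l < k)
    (hi_lower : (i - 2) * k < (i - 1) * l) (hi_upper : i * l ≤ (i - 1) * k) :
    ∃ p d a, a < d ∧ i = p + 2 ∧ l = p * d + a + 1 ∧ k = l + d := by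
  obtain ⟨d, rfl⟩ := Nat.exists_eq_add_of_le hlk.le
  have hi : 2 ≤ i := by
    by_contra! hi
    simp [show i - 1 = 0 by omega] at hi_lower
  obtain ⟨p, rfl⟩ := Nat.exists_eq_add_of_le' hi
  rw [Nat.add_sub_cancel, show p + 2 - 1 = p + 1 from rfl] at hi_lower
  rw [show p + 2 - 1 = p + 1 from rfl] at hi_upper
  have hlower : p * d < l := by linarith
  have hupper : l ≤ p * d + d := by linarith
  exact ⟨p, d, l - (p * d + 1), by omega, rfl, by omega, rfl⟩

/-- For `k > ℓ ≥ 1`, with `i = i(k,ℓ)` the intersection number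
(the unique integer `i ≥ 2` with `(i-2)/(i-1) < ℓ/k ≤ (i-1)/i`, expressed here by
cross-multiplication), and positive integers `e 0, …, e (t-1)`,
`OR(P_{e_1}^{k,ℓ}, …, P_{e_t}^{k,ℓ}) = (k-ℓ)·OR(P_{e_1}^{i,i-1}, …, P_{e_t}^{i,i-1}) + ℓ - (k-ℓ)(i-1)`. -/
theorem ordered_ramsey_loose_paths (k l i t : ℕ) (e : Fin t → ℕ)
    (ht : 1 ≤ t) (hl : 1 ≤ l) (hlk : l < k) (he : ∀ j, 1 ≤ e j)
    (hi2 : 2 ≤ i) (hi_lower : (i - 2) * k < (i - 1) * l) (hi_upper : i * l ≤ (i - 1) * k) :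
    (ORnum k (fun j => loosePath k l (e j)) : ℤ) =
      ((k : ℤ) - l) * (ORnum i (fun j => loosePath i (i - 1) (e j)) : ℤ)
        + l - ((k : ℤ) - l) * ((i : ℤ) - 1) := by
  obtain ⟨p, d, a, had, rfl, rfl, rfl⟩ :=
    exists_decomposition_of_intersectionNumber hlk hi_lower hi_upper
  have : Nonempty (Fin t) := ⟨⟨0, ht⟩⟩
  have hmin : IsLeast {M | ForcesPath (p + 1) 1 e M} (sInf {M | ForcesPath (p + 1) 1 e M}) :=
    ⟨Nat.sInf_mem (exists_forcesPath_tight _ e), fun _ => Nat.sInf_le⟩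
  obtain ⟨m, hm⟩ := Nat.exists_eq_succ_of_ne_zero (hmin.1.pos p.succ_pos).ne'
  rw [hm] at hmin
  rw [ORnum_loosePath_eq_sInf, (isLeast_forcesPath had hmin).csInf_eq,
    show p + 2 - 1 = p + 1 from rfl, show p + 2 = p + 1 + 1 from rfl,
    ORnum_loosePath_eq_sInf, hm]
  push_cast
  ring
end

section
/- Let n, p be positive integers, let t ≥ 2, and let P be any ordered 2-uniform graph on 2^p vertices whose underlying (unordered) graph is a path on 2^p vertices. Then OR(K_{2^n}, P, ..., P), with t−1 copies of P, is at most 2^{((p+1)^{t−1}(np−1)+1)/p}, where K_{2^n} denotes the complete ordered 2-uniform graph on 2^n vertices. -/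
/-- `P` is an ordered 2-uniform graph on vertex set `{1, …, m}` whose underlying
(unordered) graph is a path on `m` vertices: there is a relabeling `v` of `{1, …, m}`
so that the edges of `P` are exactly `{v j, v (j+1)}` for `j = 1, …, m-1`. -/
def IsOrderedPathGraph (P : OrderedHypergraph) (m : ℕ) : Prop :=
  P.n = m ∧ ∃ v : ℕ → ℕ, Set.BijOn v (Set.Icc 1 m) (Set.Icc 1 m) ∧
    P.edges = (Finset.Icc 1 (m - 1)).image fun j => {v j, v (j + 1)}

/-!
Let `P` be an ordered path on `m` vertices and `G` a graph on a linearly ordered set. Cut `m * b`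
vertices into `m` consecutive blocks of size `b` and look for a copy of `P` with one vertex in each
block, which is then automatically placed in the right order. Follow the path through the blocks,
keeping the set of vertices at which a partial copy can end. If this set never drops below half a
block, the copy exists; otherwise the last large set of endpoints and the unreached part of the next
block both have at least `b / 2` vertices, with no edge of `G` between them. By induction each of
the two contains an independent set of size `2 ^ n`, and their union is one of size `2 ^ (n + 1)`.
Hence `(2 * m) ^ n / 2` vertices force a copy of `P` or an independent set of size `2 ^ n`.

For several colors, treat them one at a time inside the independent set found for the previous
color. For `m = 2 ^ p` this replaces a bound `2 ^ e` by `2 ^ ((p + 1) * e - 1)`, and iterating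
`e ↦ (p + 1) * e - 1` from `n` gives the exponent.
-/

open Finset SimpleGraph

section OrderedCopies

variable {α β : Type*}

/-- `G` contains, inside the vertex set `V`, a copy of the ordered graph `P`. The copy need not be
induced. -/
def HasOrderedCopy [Preorder α] [Preorder β] (P : SimpleGraph β) (G : SimpleGraph α)
    (V : Finset α) : Prop :=
  ∃ f : P →g G, StrictMono f ∧ ∀ i, f i ∈ V

theorem HasOrderedCopy.mono [Preorder α] [Preorder β] {P : SimpleGraph β} {G : SimpleGraph α}
    {V W : Finset α} (h : HasOrderedCopy P G V) (hVW : V ⊆ W) : HasOrderedCopy P G W := by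
  obtain ⟨f, hf, hfV⟩ := h
  exact ⟨f, hf, fun i => hVW (hfV i)⟩

theorem hasOrderedCopy_top_of_isClique [LinearOrder α] {G : SimpleGraph α} {S : Finset α}
    (hS : G.IsClique S) :
    HasOrderedCopy (⊤ : SimpleGraph (Fin #S)) G S := by
  have hmem : ∀ i, S.orderEmbOfFin rfl i ∈ S := S.orderEmbOfFin_mem rfl
  exact ⟨⟨S.orderEmbOfFin rfl, fun hij => hS (hmem _) (hmem _)
    ((S.orderEmbOfFin rfl).injective.ne hij.ne)⟩, (S.orderEmbOfFin rfl).strictMono, hmem⟩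

end OrderedCopies

section OnePath

variable {α : Type*}

/-- Two vertex sets with no edge of `G` between them, each of size at least `b / 2`: the obstruction
to following a path through blocks of size `b`. The size bounds avoid the rounding in `b / 2`. -/
def IsLargeEmptyPair (G : SimpleGraph α) (b : ℕ) (A B : Finset α) : Prop :=
  b ≤ 2 * #A ∧ b ≤ 2 * #B ∧ ∀ x ∈ A, ∀ y ∈ B, ¬ G.Adj x y

open Classical in
theorem le_two_mul_card_filter_exists_adj {G : SimpleGraph α} {b : ℕ} {A B : Finset α}
    (hA : b ≤ 2 * #A) (hB : b ≤ #B) (hG : ∀ B' ⊆ B, ¬ IsLargeEmptyPair G b A B') :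
    b ≤ 2 * #{y ∈ B | ∃ x ∈ A, G.Adj x y} := by
  by_contra! hsmall
  have hcard := card_filter_add_card_filter_not (s := B) fun y => ∃ x ∈ A, G.Adj x y
  refine hG {y ∈ B | ¬ ∃ x ∈ A, G.Adj x y} (filter_subset _ _) ⟨hA, by omega, ?_⟩
  exact fun x hx y hy hxy => (mem_filter.1 hy).2 ⟨x, hx, hxy⟩

/- The induction removes the first set and shrinks the second one to the neighbors of the first,
which is why only half of the first set is required. -/
theorem exists_transversal_path {G : SimpleGraph α} {b k : ℕ} (hb : 0 < b)
    (J : Fin (k + 1) → Finset α) (hJ₀ : b ≤ 2 * #(J 0)) (hJ : ∀ i : Fin k, b ≤ #(J i.succ))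
    (hG : ∀ i : Fin k, ∀ A ⊆ J i.castSucc, ∀ B ⊆ J i.succ, ¬ IsLargeEmptyPair G b A B) :
    ∃ x : Fin (k + 1) → α, (∀ i, x i ∈ J i) ∧ ∀ i : Fin k, G.Adj (x i.castSucc) (x i.succ) := by
  classical
  induction k with
  | zero =>
    obtain ⟨y, hy⟩ : (J 0).Nonempty := card_pos.1 (by omega)
    exact ⟨fun _ => y, fun i => by rwa [Fin.eq_zero i], fun i => i.elim0⟩
  | succ k ih =>
    let N : Finset α := {y ∈ J 1 | ∃ x ∈ J 0, G.Adj x y}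
    have hN : b ≤ 2 * #N :=
      le_two_mul_card_filter_exists_adj hJ₀ (hJ 0) (hG 0 (J 0) Subset.rfl)
    let J' : Fin (k + 1) → Finset α := Fin.cons N fun i => J i.succ.succ
    have hJ' : ∀ i, J' i ⊆ J i.succ := Fin.cases (filter_subset _ _) fun _ => Subset.rfl
    obtain ⟨x, hx, hadj⟩ := ih J' hN (fun i => hJ i.succ) fun i A hA B hB =>
      hG i.succ A (hA.trans (hJ' i.castSucc)) B hB
    obtain ⟨-, y, hy, hyx⟩ := mem_filter.1 (hx 0)
    exact ⟨Fin.cons y x, Fin.cases hy fun i => hJ' i (hx i), Fin.cases hyx hadj⟩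

theorem adj_of_pathGraph_adj {G : SimpleGraph α} {k : ℕ} {x : Fin (k + 1) → α}
    (hx : ∀ i : Fin k, G.Adj (x i.castSucc) (x i.succ)) {i j : Fin (k + 1)}
    (hij : (pathGraph (k + 1)).Adj i j) : G.Adj (x i) (x j) := by
  have adj_of_succ : ∀ {i j : Fin (k + 1)}, i.val + 1 = j.val → G.Adj (x i) (x j) := by
    intro i j h
    have hj : j = Fin.succ ⟨i, by omega⟩ := Fin.ext h.symm
    rw [hj]
    exact hx ⟨i, by omega⟩
  rcases pathGraph_adj.1 hij with h | h
  · exact adj_of_succ h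
  · exact (adj_of_succ h).symm

theorem isNIndepSet_union [DecidableEq α] {G : SimpleGraph α} {S T : Finset α} {r s : ℕ}
    (hS : G.IsNIndepSet r S) (hT : G.IsNIndepSet s T) (hdisj : Disjoint S T)
    (hST : ∀ x ∈ S, ∀ y ∈ T, ¬ G.Adj x y) : G.IsNIndepSet (r + s) (S ∪ T) := by
  refine ⟨?_, by rw [card_union_of_disjoint hdisj, hS.card_eq, hT.card_eq]⟩
  rw [coe_union, isIndepSet_iff, Set.pairwise_union]
  exact ⟨hS.isIndepSet, hT.isIndepSet, fun x hx y hy _ =>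
    ⟨hST x hx y hy, fun hyx => hST x hx y hy hyx.symm⟩⟩

variable [LinearOrder α]

theorem exists_consecutive_blocks {V : Finset α} {m b : ℕ} (hV : m * b ≤ #V) :
    ∃ I : Fin m → Finset α, (∀ i, I i ⊆ V) ∧ (∀ i, #(I i) = b) ∧
      ∀ i j, i < j → ∀ x ∈ I i, ∀ y ∈ I j, x < y := by
  let g : Fin m × Fin b → α := fun q => V.orderEmbOfFin rfl (Fin.castLE hV (finProdFinEquiv q))
  have hg : Function.Injective g := (V.orderEmbOfFin rfl).injective.comp
    ((Fin.castLE_injective hV).comp finProdFinEquiv.injective)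
  refine ⟨fun i => univ.image fun a => g (i, a), fun i => ?_, fun i => ?_, ?_⟩
  · exact image_subset_iff.2 fun a _ => V.orderEmbOfFin_mem rfl _
  · exact (card_image_of_injective _ (hg.comp (Prod.mk_right_injective i))).trans (card_fin b)
  · simp only [mem_image, mem_univ, true_and]
    rintro i j hij _ ⟨a, rfl⟩ _ ⟨a', rfl⟩
    refine (V.orderEmbOfFin rfl).strictMono (Fin.lt_def.2 ?_)
    calc (a : ℕ) + b * i < b * (i + 1) := by rw [mul_add_one]; omega
      _ ≤ b * j := Nat.mul_le_mul_left b hij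
      _ ≤ a' + b * j := Nat.le_add_left _ _

theorem hasOrderedCopy_or_exists_isLargeEmptyPair {m : ℕ} (hm : 0 < m) {P : SimpleGraph (Fin m)}
    (φ : pathGraph m ≃g P) (G : SimpleGraph α) {b : ℕ} (hb : 0 < b) {V : Finset α}
    (hV : m * b ≤ #V) :
    HasOrderedCopy P G V ∨
      ∃ A ⊆ V, ∃ B ⊆ V, Disjoint A B ∧ IsLargeEmptyPair G b A B := by
  obtain ⟨k, rfl⟩ := Nat.exists_eq_add_one.2 hm
  obtain ⟨I, hIV, hIcard, hI⟩ := exists_consecutive_blocks hV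
  have hdisj : ∀ i j, i ≠ j → Disjoint (I i) (I j) := by
    refine fun i j hij => disjoint_left.2 fun x hxi hxj => ?_
    rcases hij.lt_or_gt with h | h
    · exact (hI i j h x hxi x hxj).false
    · exact (hI j i h x hxj x hxi).false
  refine or_iff_not_imp_right.2 fun hempty => ?_
  obtain ⟨x, hxI, hx⟩ := exists_transversal_path (G := G) hb (fun i => I (φ i))
    (by rw [hIcard]; omega) (fun i => (hIcard _).ge) fun i A hA B hB hAB =>
      hempty ⟨A, hA.trans (hIV _), B, hB.trans (hIV _),
        (hdisj _ _ (φ.injective.ne i.castSucc_lt_succ.ne)).mono hA hB, hAB⟩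
  have hblock : ∀ i, x (φ.symm i) ∈ I i := fun i => by simpa using hxI (φ.symm i)
  exact ⟨⟨x ∘ φ.symm, fun hij => adj_of_pathGraph_adj hx (φ.symm.map_adj_iff.2 hij)⟩,
    fun i j hij => hI i j hij _ (hblock i) _ (hblock j), fun i => hIV i (hblock i)⟩

theorem exists_isNIndepSet_or_hasOrderedCopy {m : ℕ} (hm : 0 < m) {P : SimpleGraph (Fin m)}
    (φ : pathGraph m ≃g P) (G : SimpleGraph α) (n : ℕ) {V : Finset α}
    (hV : (2 * m) ^ n ≤ 2 * #V) :
    (∃ S ⊆ V, G.IsNIndepSet (2 ^ n) S) ∨ HasOrderedCopy P G V := by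
  induction n generalizing V with
  | zero =>
    obtain ⟨x, hx⟩ : V.Nonempty := card_pos.1 (by rw [pow_zero] at hV; omega)
    exact Or.inl ⟨{x}, singleton_subset_iff.2 hx, by simp [isIndepSet_iff], card_singleton x⟩
  | succ n ih =>
    refine or_iff_not_imp_right.2 fun hcopy => ?_
    have hblocks : m * (2 * m) ^ n ≤ #V := by rw [pow_succ] at hV; linarith
    obtain ⟨A, hAV, B, hBV, hdisj, hA, hB, hAB⟩ :=
      (hasOrderedCopy_or_exists_isLargeEmptyPair hm φ G (by positivity) hblocks).resolve_left hcopy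
    obtain ⟨S, hSA, hS⟩ := (ih hA).resolve_right fun h => hcopy (h.mono hAV)
    obtain ⟨T, hTB, hT⟩ := (ih hB).resolve_right fun h => hcopy (h.mono hBV)
    refine ⟨S ∪ T, union_subset (hSA.trans hAV) (hTB.trans hBV), ?_⟩
    rw [pow_succ, mul_two]
    exact isNIndepSet_union hS hT (hdisj.mono hSA hTB)
      fun x hx y hy => hAB x (hSA hx) y (hTB hy)

end OnePath

section ManyPaths

/-- The exponent `e` such that `2 ^ e` vertices suffice for `K_{2 ^ n}` against `u` paths on
`2 ^ p` vertices. -/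
def ramseyExponent (n p : ℕ) : ℕ → ℕ
  | 0 => n
  | u + 1 => ramseyExponent n p u * (p + 1) - 1

theorem ramseyExponent_pos {n p : ℕ} (hn : 1 ≤ n) (hp : 1 ≤ p) (u : ℕ) :
    1 ≤ ramseyExponent n p u := by
  induction u with
  | zero => exact hn
  | succ u ih =>
    have : 1 * (1 + 1) ≤ ramseyExponent n p u * (p + 1) := Nat.mul_le_mul ih (by omega)
    rw [ramseyExponent]
    omega

theorem ramseyExponent_cast {n p : ℕ} (hn : 1 ≤ n) (hp : 1 ≤ p) (u : ℕ) :
    (ramseyExponent n p u : ℝ) = (((p : ℝ) + 1) ^ u * ((n : ℝ) * (p : ℝ) - 1) + 1) / (p : ℝ) := by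
  rw [eq_div_iff (by positivity)]
  induction u with
  | zero => simp [ramseyExponent]
  | succ u ih =>
    have hpos : 1 ≤ ramseyExponent n p u * (p + 1) :=
      Nat.mul_pos (ramseyExponent_pos hn hp u) p.succ_pos
    rw [ramseyExponent, Nat.cast_sub hpos]
    push_cast
    linear_combination ((p : ℝ) + 1) * ih

theorem exists_forall_isIndepSet_or_exists_hasOrderedCopy {α ι : Type*} [LinearOrder α] {n p : ℕ}
    {P : ι → SimpleGraph (Fin (2 ^ p))} (φ : ∀ i, pathGraph (2 ^ p) ≃g P i)
    (G : ι → SimpleGraph α) (s : Finset ι) {V : Finset α}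
    (hV : 2 ^ ramseyExponent n p #s ≤ #V) :
    (∃ S ⊆ V, #S = 2 ^ n ∧ ∀ i ∈ s, (G i).IsIndepSet S) ∨
      ∃ i ∈ s, HasOrderedCopy (P i) (G i) V := by
  classical
  induction s using Finset.induction_on generalizing V with
  | empty =>
    obtain ⟨S, hSV, hS⟩ := exists_subset_card_eq hV
    exact Or.inl ⟨S, hSV, hS, by simp⟩
  | insert i s hi ih =>
    rw [card_insert_of_notMem hi, ramseyExponent] at hV
    set e := ramseyExponent n p #s
    have hthreshold : (2 * 2 ^ p) ^ e ≤ 2 * #V := calc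
      (2 * 2 ^ p) ^ e = 2 ^ (e * (p + 1)) := by rw [← pow_succ', ← pow_mul, mul_comm]
      _ ≤ 2 ^ (e * (p + 1) - 1 + 1) := Nat.pow_le_pow_right two_pos (by omega)
      _ = 2 * 2 ^ (e * (p + 1) - 1) := pow_succ' _ _
      _ ≤ 2 * #V := Nat.mul_le_mul_left 2 hV
    rcases exists_isNIndepSet_or_hasOrderedCopy (Nat.two_pow_pos p) (φ i) (G i) e hthreshold with
      ⟨S, hSV, hS⟩ | hcopy
    · rcases ih hS.card_eq.ge with ⟨T, hTS, hT, hindep⟩ | ⟨j, hj, hcopy⟩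
      · exact Or.inl ⟨T, hTS.trans hSV, hT, forall_mem_insert _ _ _ |>.2
          ⟨hS.isIndepSet.mono (coe_subset.2 hTS), hindep⟩⟩
      · exact Or.inr ⟨j, mem_insert_of_mem hj, hcopy.mono hSV⟩
    · exact Or.inr ⟨i, mem_insert_self i s, hcopy⟩

end ManyPaths

section Containment

theorem exists_strictMono_extension {m N : ℕ} {f : Fin m → ℕ} (hf : StrictMono f)
    (hfN : ∀ i, f i ∈ Icc 1 N) : ∃ g : ℕ → ℕ, StrictMono g ∧ ∀ i : Fin m, g (i + 1) = f i := by
  let g : ℕ → ℕ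
    | 0 => 0
    | k + 1 => if h : k < m then f ⟨k, h⟩ else N + 1 + k
  refine ⟨g, strictMono_nat_of_lt_succ ?_, fun i => by simp [g]⟩
  rintro (_ | k)
  · by_cases h : 0 < m
    · simpa [g, h] using Nat.lt_of_succ_le (mem_Icc.1 (hfN ⟨0, h⟩)).1
    · simp [g, h]
  · by_cases h : k + 1 < m
    · simpa [g, h, Nat.lt_of_succ_lt h] using hf (Fin.mk_lt_mk.2 k.lt_succ_self)
    · by_cases hk : k < m
      · have := (mem_Icc.1 (hfN ⟨k, hk⟩)).2
        simp only [g, h, hk, dite_true, dite_false]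
        omega
      · simp [g, h, hk]

/-- `H` becomes a subgraph of `Q` when the vertex `i + 1` of `H` is identified with `i : Fin m`.
This passes from hypergraphs on `{1, …, m}` to Mathlib graphs on `Fin m`. -/
def OrderedHypergraph.IsSubgraphOf (H : OrderedHypergraph) {m : ℕ} (Q : SimpleGraph (Fin m)) :
    Prop :=
  H.n = m ∧ ∀ e ∈ H.edges, ∃ i j, Q.Adj i j ∧ e = {(i : ℕ) + 1, (j : ℕ) + 1}

/-- The color class `i` of a coloring `c` of pairs, as a graph; values of `c` on other sets are
ignored. -/
def colorGraph {α κ : Type*} [DecidableEq α] (c : Finset α → κ) (i : κ) : SimpleGraph α where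
  Adj x y := x ≠ y ∧ c {x, y} = i
  symm := ⟨fun x y h => ⟨h.1.symm, pair_comm x y ▸ h.2⟩⟩
  loopless := ⟨fun _ h => h.1 rfl⟩

theorem OrderedHypergraph.IsSubgraphOf.contains_coloredSubgraph {H : OrderedHypergraph} {m : ℕ}
    {Q : SimpleGraph (Fin m)} (hH : H.IsSubgraphOf Q) {N t : ℕ} {c : Finset ℕ → Fin t} {i : Fin t}
    (hQ : HasOrderedCopy Q (colorGraph c i) (Icc 1 N)) :
    (coloredSubgraph 2 N c i).Contains H := by
  obtain ⟨rfl, hedges⟩ := hH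
  obtain ⟨f, hf, hfN⟩ := hQ
  obtain ⟨g, hg, hgf⟩ := exists_strictMono_extension hf hfN
  refine ⟨g, hg, fun v hv => ?_, fun e he => ?_⟩
  · obtain ⟨hv₁, hvn⟩ := mem_Icc.1 hv
    obtain ⟨k, rfl⟩ := Nat.exists_eq_add_one.2 hv₁
    exact hgf ⟨k, hvn⟩ ▸ hfN ⟨k, hvn⟩
  · obtain ⟨a, b, hab, rfl⟩ := hedges e he
    obtain ⟨hne, hcolor⟩ := f.map_adj hab
    rw [image_insert, image_singleton, hgf, hgf]
    refine mem_filter.2 ⟨mem_powersetCard.2 ⟨?_, card_pair hne⟩, hcolor⟩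
    exact insert_subset (hfN a) (singleton_subset_iff.2 (hfN b))

theorem completeHG_two_isSubgraphOf_top (m : ℕ) :
    (completeHG 2 m).IsSubgraphOf (⊤ : SimpleGraph (Fin m)) := by
  refine ⟨rfl, fun e he => ?_⟩
  obtain ⟨heN, hecard⟩ := mem_powersetCard.1 he
  obtain ⟨x, y, hxy, rfl⟩ := card_eq_two.1 hecard
  have exists_fin : ∀ z ∈ ({x, y} : Finset ℕ), ∃ i : Fin m, z = i + 1 := fun z hz => by
    obtain ⟨hz₁, hzm⟩ := mem_Icc.1 (heN hz)
    exact ⟨⟨z - 1, by omega⟩, (Nat.sub_add_cancel hz₁).symm⟩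
  obtain ⟨i, rfl⟩ := exists_fin x (by simp)
  obtain ⟨j, rfl⟩ := exists_fin y (by simp)
  exact ⟨i, j, fun hij => hxy (by rw [hij]), rfl⟩

theorem exists_perm_of_bijOn_Icc {m : ℕ} {v : ℕ → ℕ}
    (hv : Set.BijOn v (Set.Icc 1 m) (Set.Icc 1 m)) :
    ∃ σ : Equiv.Perm (Fin m), ∀ i : Fin m, v (i + 1) = σ i + 1 := by
  have hmem : ∀ i : Fin m, (i : ℕ) + 1 ∈ Set.Icc 1 m := fun i => ⟨by omega, i.isLt⟩
  have hv₁ : ∀ i : Fin m, 1 ≤ v (i + 1) := fun i => (hv.mapsTo (hmem i)).1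
  have hvm : ∀ i : Fin m, v (i + 1) ≤ m := fun i => (hv.mapsTo (hmem i)).2
  let w : Fin m → Fin m := fun i => ⟨v (i + 1) - 1, by have := hv₁ i; have := hvm i; omega⟩
  have hw : ∀ i : Fin m, v (i + 1) = w i + 1 := fun i => (Nat.sub_add_cancel (hv₁ i)).symm
  have hinj : Function.Injective w := fun i j hij =>
    Fin.ext (Nat.succ_injective (hv.injOn (hmem i) (hmem j) (by rw [hw, hw, hij])))
  exact ⟨Equiv.ofBijective w (Finite.injective_iff_bijective.1 hinj), hw⟩

theorem IsOrderedPathGraph.exists_isSubgraphOf {P : OrderedHypergraph} {m : ℕ}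
    (hP : IsOrderedPathGraph P m) :
    ∃ Q : SimpleGraph (Fin m), P.IsSubgraphOf Q ∧ Nonempty (pathGraph m ≃g Q) := by
  obtain ⟨hPm, v, hv, hedges⟩ := hP
  obtain ⟨σ, hσ⟩ := exists_perm_of_bijOn_Icc hv
  refine ⟨(pathGraph m).map σ.toEmbedding, ⟨hPm, fun e he => ?_⟩, ⟨Iso.map σ (pathGraph m)⟩⟩
  rw [hedges] at he
  obtain ⟨j, hj, rfl⟩ := mem_image.1 he
  obtain ⟨hj₁, hjm⟩ := mem_Icc.1 hj
  obtain ⟨k, rfl⟩ := Nat.exists_eq_add_one.2 hj₁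
  let i : Fin m := ⟨k, by omega⟩
  let i' : Fin m := ⟨k + 1, by omega⟩
  have hii' : (pathGraph m).Adj i i' := pathGraph_adj.2 (Or.inl rfl)
  exact ⟨σ i, σ i', (Iso.map σ (pathGraph m)).map_adj_iff.2 hii', by rw [← hσ i, ← hσ i']⟩

theorem ORnum_le_two_pow_ramseyExponent {n p u : ℕ} {P : Fin u → OrderedHypergraph}
    (hP : ∀ i, IsOrderedPathGraph (P i) (2 ^ p)) :
    ORnum 2 (Fin.cons (completeHG 2 (2 ^ n)) P) ≤ 2 ^ ramseyExponent n p u := by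
  choose Q hPQ hQ using fun i => (hP i).exists_isSubgraphOf
  refine Nat.sInf_le fun c => ?_
  rcases exists_forall_isIndepSet_or_exists_hasOrderedCopy (n := n) (fun i => (hQ i).some)
    (fun i => colorGraph c i.succ) univ (V := Icc 1 (2 ^ ramseyExponent n p u)) (by simp) with
    ⟨S, hSV, hS, hindep⟩ | ⟨i, -, hcopy⟩
  · have hclique : (colorGraph c 0).IsClique S := fun x hx y hy hxy => ⟨hxy, by
      by_contra hcolor
      obtain ⟨i, hi⟩ := Fin.exists_succ_eq.2 hcolor
      exact hindep i (mem_univ i) hx hy hxy ⟨hxy, hi.symm⟩⟩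
    have hcopy := (hasOrderedCopy_top_of_isClique hclique).mono hSV
    rw [hS] at hcopy
    exact ⟨0, (completeHG_two_isSubgraphOf_top _).contains_coloredSubgraph hcopy⟩
  · exact ⟨i.succ, (hPQ i).contains_coloredSubgraph hcopy⟩

end Containment

theorem ordered_ramsey_complete_vs_paths_general (n p u : ℕ) (hn : 1 ≤ n) (hp : 1 ≤ p)
    (P : Fin u → OrderedHypergraph) (hP : ∀ i, IsOrderedPathGraph (P i) (2 ^ p)) :
    (ORnum 2 (Fin.cons (completeHG 2 (2 ^ n)) P) : ℝ) ≤
      (2 : ℝ) ^ (((((p : ℝ) + 1) ^ u * ((n : ℝ) * (p : ℝ) - 1) + 1)) / (p : ℝ)) := by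
  rw [← ramseyExponent_cast hn hp u, Real.rpow_natCast]
  exact_mod_cast ORnum_le_two_pow_ramseyExponent hP

/-- For positive integers `n, p`, `t = u+1 ≥ 2` colors, and `P` any
ordered 2-uniform path on `2^p` vertices,
`OR(K_{2^n}, P, …, P) ≤ 2^{((p+1)^{t-1}(np-1)+1)/p}` (with `t-1 = u` copies of `P`). -/
theorem ordered_ramsey_complete_vs_paths (n p u : ℕ) (hn : 1 ≤ n) (hp : 1 ≤ p) (hu : 1 ≤ u)
    (P : OrderedHypergraph) (hP : IsOrderedPathGraph P (2 ^ p)) :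
    (ORnum 2 (Fin.cons (completeHG 2 (2 ^ n)) (fun _ : Fin u => P)) : ℝ) ≤
      (2 : ℝ) ^ (((((p : ℝ) + 1) ^ u * ((n : ℝ) * (p : ℝ) - 1) + 1)) / (p : ℝ)) :=
  ordered_ramsey_complete_vs_paths_general n p u hn hp (fun _ => P) fun _ => hP
end

section
/- For an integer k ≥ 1, positive integers e_1,...,e_t, and integers r_1,...,r_t ∈ {0,...,k}, the ordered Ramsey number satisfies OR(M_{e_1}^{k,r_1},...,M_{e_t}^{k,r_t}) ≥ k·(1 + Σ_{i=1}^t (e_i − 1)). -/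
/-- The `(k,r)`-nested matching `M_e^{k,r}` on `e` edges, written (order-isomorphically)
on the vertex set `{1, …, ke}`:  edge `i` (for `i = 0, …, e-1`, with `i = 0` the edge of
`M_1^{k,r}` and edge `i+1` obtained from edge `i` by taking the `k-r` greatest vertices
below and the `r` least vertices above all previous vertices) consists of the block of
`k-r` vertices `{(e-1-i)(k-r)+1, …, (e-i)(k-r)}` together with the block of `r` vertices
`{e(k-r)+ir+1, …, e(k-r)+(i+1)r}`. -/
def nestedMatching (k r e : ℕ) : OrderedHypergraph :=
  ⟨k * e,
    (Finset.range e).image fun i =>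
      Finset.Icc ((e - 1 - i) * (k - r) + 1) ((e - i) * (k - r)) ∪
        Finset.Icc (e * (k - r) + i * r + 1) (e * (k - r) + (i + 1) * r)⟩

/-!
For the lower bound, let a word of colours peel an interval from the outside in: a letter `x`
removes `k - r x` vertices on the left and `r x` on the right, and gives colour `x` to every
`k`-set that is not contained in what remains. The outermost edge of a nested matching of colour
`x` uses up at least these vertices, so the other edges lie in the remaining interval. If fewer
than `k` vertices are left after the last letter, no colour has a nested matching with more edges
than the colour has occurrences in the word.

A dual recursion shows that the set of `N` whose infimum is the Ramsey number is not empty. Take a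
`k`-set whose vertices are far apart. If its colour is `x`, continue in the gap to the right of
its first `k - r x` vertices: the `k`-set then wraps around every matching of colour `x` found
there. This reveals a word of colours of any given length, and by pigeonhole some colour `i` occurs
in it at least `e i` times.
-/

section NestedMatching

open Finset

variable {k r e : ℕ}

theorem nestedMatching_edges_zero (k r : ℕ) : (nestedMatching k r 0).edges = ∅ := by
  simp [nestedMatching]

theorem nestedMatching_edges_succ (hr : r ≤ k) (e : ℕ) :
    (nestedMatching k r (e + 1)).edges =
      insert (Ioc 0 (k - r) ∪ Ioc (k - r + k * e) (k * e + k))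
        ((nestedMatching k r e).edges.image (image (· + (k - r)))) := by
  obtain ⟨l, rfl⟩ := Nat.exists_eq_add_of_le' hr
  simp only [nestedMatching, range_add_one, image_insert, image_image, Nat.add_sub_cancel,
    Icc_add_one_left_eq_Ioc]
  congr 1
  · simp only [Nat.sub_self, Nat.zero_mul, Nat.add_sub_cancel_left, Nat.one_mul]
    congr 2 <;> ring
  · refine image_congr fun i hi ↦ ?_
    obtain ⟨d, rfl⟩ := Nat.exists_eq_add_of_lt (mem_range.mp hi)
    have outer : i + d + 1 + 1 - i = d + 2 := by omega
    have inner : i + d + 1 - i = d + 1 := by omega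
    simp only [Function.comp_apply, image_union, image_add_right_Ioc, Nat.add_sub_cancel, outer,
      inner, Nat.add_sub_cancel_left]
    congr 2 <;> ring

theorem forall_mem_nestedMatching_edges_succ (hr : r ≤ k) {P : Finset ℕ → Prop} :
    (∀ A ∈ (nestedMatching k r (e + 1)).edges, P A) ↔
      P (Ioc 0 (k - r) ∪ Ioc (k - r + k * e) (k * e + k)) ∧
        ∀ A ∈ (nestedMatching k r e).edges, P (A.image (· + (k - r))) := by
  rw [nestedMatching_edges_succ hr, forall_mem_insert, forall_mem_image]

theorem card_of_mem_nestedMatching_edges (hr : r ≤ k) :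
    ∀ A ∈ (nestedMatching k r e).edges, #A = k := by
  induction e with
  | zero => simp [nestedMatching_edges_zero]
  | succ e ih =>
    refine (forall_mem_nestedMatching_edges_succ hr).mpr ⟨?_, fun A hA ↦ ?_⟩
    · have blocks_disjoint : Disjoint (Ioc 0 (k - r)) (Ioc (k - r + k * e) (k * e + k)) :=
        disjoint_left.mpr fun v hv hv' ↦ by simp only [mem_Ioc] at hv hv'; omega
      rw [card_union_of_disjoint blocks_disjoint, Nat.card_Ioc, Nat.card_Ioc]
      omega
    · rw [card_image_of_injective _ (add_left_injective _), ih A hA]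

theorem biUnion_nestedMatching_edges (hr : r ≤ k) (e : ℕ) :
    (nestedMatching k r e).edges.biUnion id = Ioc 0 (k * e) := by
  induction e with
  | zero => simp [nestedMatching_edges_zero]
  | succ e ih =>
    have shifted_union :
        ((nestedMatching k r e).edges.image (image (· + (k - r)))).biUnion id =
          Ioc (k - r) (k - r + k * e) :=
      calc
        _ = ((nestedMatching k r e).edges.biUnion id).image (· + (k - r)) := by
          rw [image_biUnion, biUnion_image]
          rfl
        _ = Ioc (k - r) (k - r + k * e) := by
          rw [ih, image_add_right_Ioc, Nat.zero_add, Nat.add_comm]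
    rw [nestedMatching_edges_succ hr, biUnion_insert, shifted_union, Nat.mul_succ]
    ext v
    simp only [id, mem_union, mem_Ioc]
    omega

theorem subset_of_mem_nestedMatching_edges (hr : r ≤ k) {A : Finset ℕ}
    (hA : A ∈ (nestedMatching k r e).edges) : A ⊆ Ioc 0 (k * e) :=
  biUnion_nestedMatching_edges hr e ▸ subset_biUnion_of_mem id hA

/-- The edges of the family `E` inside `I`, that is, the subhypergraph induced on `I`. -/
def inducedEdges (E : Set (Finset ℕ)) (I : Finset ℕ) : Set (Finset ℕ) :=
  {A ∈ E | A ⊆ I}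

/-- A copy of `G` whose edges belong to the family `E`. In contrast to
`OrderedHypergraph.Contains`, nothing is required of vertices that lie on no edge. -/
def OrderedHypergraph.EmbedsInto (G : OrderedHypergraph) (E : Set (Finset ℕ)) : Prop :=
  ∃ f : ℕ → ℕ, StrictMono f ∧ ∀ A ∈ G.edges, A.image f ∈ E

theorem OrderedHypergraph.EmbedsInto.mono {G : OrderedHypergraph} {E E' : Set (Finset ℕ)}
    (h : G.EmbedsInto E) (hE : E ⊆ E') : G.EmbedsInto E' :=
  let ⟨f, hf, hfE⟩ := h
  ⟨f, hf, fun A hA ↦ hE (hfE A hA)⟩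

theorem contains_coloredSubgraph_iff {G : OrderedHypergraph} {N t : ℕ} {c : Finset ℕ → Fin t}
    {i : Fin t} (uniform : ∀ A ∈ G.edges, #A = k) (cover : G.edges.biUnion id = Ioc 0 G.n) :
    (coloredSubgraph k N c i).Contains G ↔ G.EmbedsInto (inducedEdges (c ⁻¹' {i}) (Ioc 0 N)) := by
  constructor
  · rintro ⟨f, hf, -, hfE⟩
    refine ⟨f, hf, fun A hA ↦ ?_⟩
    obtain ⟨hAk, hAc⟩ := mem_filter.mp (hfE A hA)
    exact ⟨hAc, (mem_powersetCard.mp hAk).1⟩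
  · rintro ⟨f, hf, hfE⟩
    refine ⟨f, hf, fun v hv ↦ ?_, fun A hA ↦ mem_filter.mpr ⟨mem_powersetCard.mpr
      ⟨(hfE A hA).2, ?_⟩, (hfE A hA).1⟩⟩
    · obtain ⟨A, hA, hvA⟩ := mem_biUnion.mp (cover ▸ hv : v ∈ G.edges.biUnion id)
      exact (hfE A hA).2 (mem_image_of_mem f hvA)
    · rw [card_image_of_injective A hf.injective, uniform A hA]

theorem contains_nestedMatching_iff (hr : r ≤ k) {N t : ℕ} {c : Finset ℕ → Fin t} {i : Fin t} :
    (coloredSubgraph k N c i).Contains (nestedMatching k r e) ↔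
      (nestedMatching k r e).EmbedsInto (inducedEdges (c ⁻¹' {i}) (Ioc 0 N)) :=
  contains_coloredSubgraph_iff (card_of_mem_nestedMatching_edges hr)
    (biUnion_nestedMatching_edges hr e)

theorem nestedMatching_vertex_image_mem {f : ℕ → ℕ} {I : Finset ℕ} (hr : r ≤ k)
    (hf : ∀ A ∈ (nestedMatching k r e).edges, A.image f ⊆ I) {v : ℕ} (hv : v ∈ Ioc 0 (k * e)) :
    f v ∈ I := by
  rw [← biUnion_nestedMatching_edges hr] at hv
  obtain ⟨A, hA, hvA⟩ := mem_biUnion.mp hv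
  exact hf A hA (mem_image_of_mem f hvA)

section EmbedsInto

variable {E : Set (Finset ℕ)}

theorem nestedMatching_zero_embedsInto : (nestedMatching k r 0).EmbedsInto E :=
  ⟨id, strictMono_id, by simp [nestedMatching_edges_zero]⟩

theorem nestedMatching_embedsInto_of_succ (hr : r ≤ k)
    (h : (nestedMatching k r (e + 1)).EmbedsInto E) : (nestedMatching k r e).EmbedsInto E := by
  obtain ⟨f, hf, hfE⟩ := h
  refine ⟨f ∘ (· + (k - r)), hf.comp add_left_strictMono, fun A hA ↦ ?_⟩
  simpa only [image_image] using ((forall_mem_nestedMatching_edges_succ hr).mp hfE).2 A hA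

theorem nestedMatching_embedsInto_of_le (hr : r ≤ k) {e' : ℕ} (he : e ≤ e')
    (h : (nestedMatching k r e').EmbedsInto E) : (nestedMatching k r e).EmbedsInto E := by
  induction he with
  | refl => exact h
  | step _ ih => exact ih (nestedMatching_embedsInto_of_succ hr h)

theorem le_card_of_nestedMatching_succ_embedsInto (hr : r ≤ k) {I : Finset ℕ}
    (h : (nestedMatching k r (e + 1)).EmbedsInto (inducedEdges E I)) : k ≤ #I := by
  obtain ⟨f, hf, hfE⟩ := h
  have edge_bound (A : Finset ℕ) (hA : A ∈ (nestedMatching k r (e + 1)).edges) : k ≤ #I :=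
    calc k = #(A.image f) := by
          rw [card_image_of_injective A hf.injective, card_of_mem_nestedMatching_edges hr A hA]
      _ ≤ #I := card_le_card (hfE A hA).2
  -- The predicate is constant: the equivalence only serves to provide an edge.
  exact ((forall_mem_nestedMatching_edges_succ hr).mp edge_bound).1

theorem nestedMatching_embedsInto_inner_interval (hr : r ≤ k) {a b : ℕ}
    (h : (nestedMatching k r (e + 1)).EmbedsInto (inducedEdges E (Ioc a b))) :
    (nestedMatching k r e).EmbedsInto (inducedEdges E (Ioc (a + (k - r)) (b - r))) := by
  obtain ⟨f, hf, hfE⟩ := h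
  refine ⟨f ∘ (· + (k - r)), hf.comp add_left_strictMono, fun A hA ↦ ⟨?_, ?_⟩⟩
  · simpa only [image_image] using (((forall_mem_nestedMatching_edges_succ hr).mp hfE).2 A hA).1
  · refine image_subset_iff.mpr fun v hv ↦ ?_
    have hv' := mem_Ioc.mp (subset_of_mem_nestedMatching_edges hr hA hv)
    have vertex_mem {w : ℕ} (hw : 0 < w ∧ w ≤ k * e + k) : a < f w ∧ f w ≤ b :=
      mem_Ioc.mp (nestedMatching_vertex_image_mem hr (fun A hA ↦ (hfE A hA).2) (mem_Ioc.mpr hw))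
    have left_room := hf.add_le_nat (k - r) v
    have right_room := hf.add_le_nat r (v + (k - r))
    have lower := (vertex_mem (w := v) (by omega)).1
    have upper := (vertex_mem (w := r + (v + (k - r))) (by omega)).2
    rw [Nat.add_comm (k - r) v] at left_room
    rw [mem_Ioc, Function.comp_apply]
    omega

/-- The vertex map of the copy of `nestedMatching k r (e + 1)` that has `p` on its outer edge and
`f` on the others; the outer edge has `l = k - r` vertices on the left of the `n = k * e` vertices
of the others. -/
def wrapMap (l n : ℕ) (p f : ℕ → ℕ) (v : ℕ) : ℕ :=
  if v ≤ l then p v else if v ≤ l + n then f (v - l) else p (v - n)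

theorem wrapMap_of_le {l n v : ℕ} {p f : ℕ → ℕ} (hv : v ≤ l) : wrapMap l n p f v = p v :=
  if_pos hv

theorem wrapMap_add_left {l n v : ℕ} {p f : ℕ → ℕ} (hv : v ∈ Ioc 0 n) :
    wrapMap l n p f (v + l) = f v := by
  rw [mem_Ioc] at hv
  rw [wrapMap, if_neg (by omega), if_pos (by omega), Nat.add_sub_cancel]

theorem wrapMap_add_right {l n v : ℕ} {p f : ℕ → ℕ} (hv : l < v) :
    wrapMap l n p f (v + n) = p v := by
  rw [wrapMap, if_neg (by omega), if_neg (by omega), Nat.add_sub_cancel]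

theorem strictMono_wrapMap {l n : ℕ} {p f : ℕ → ℕ} (hp : StrictMono p) (hf : StrictMono f)
    (hpf : ∀ v ∈ Ioc 0 n, f v ∈ Ioo (p l) (p (l + 1))) : StrictMono (wrapMap l n p f) := by
  simp only [mem_Ioc, mem_Ioo] at hpf
  refine strictMono_nat_of_lt_succ fun v ↦ ?_
  unfold wrapMap
  split_ifs
  · exact hp (Nat.lt_succ_self v)
  · obtain rfl : v = l := by omega
    exact (hpf _ (by omega)).1
  · exact hp (by omega)
  · omega
  · exact hf (by omega)
  · rw [show v + 1 - n = l + 1 by omega]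
    exact (hpf _ (by omega)).2
  · omega
  · omega
  · exact hp (by omega)

theorem nestedMatching_succ_embedsInto (hr : r ≤ k) {p : ℕ → ℕ} (hp : StrictMono p)
    (outer : (Ioc 0 k).image p ∈ E)
    (h : (nestedMatching k r e).EmbedsInto (inducedEdges E (Ioo (p (k - r)) (p (k - r + 1))))) :
    (nestedMatching k r (e + 1)).EmbedsInto E := by
  obtain ⟨f, hf, hfE⟩ := h
  refine ⟨wrapMap (k - r) (k * e) p f, strictMono_wrapMap hp hf fun v hv ↦
    nestedMatching_vertex_image_mem hr (fun A hA ↦ (hfE A hA).2) hv,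
    (forall_mem_nestedMatching_edges_succ hr).mpr ⟨?_, fun A hA ↦ ?_⟩⟩
  · have left_block : (Ioc 0 (k - r)).image (wrapMap (k - r) (k * e) p f) =
        (Ioc 0 (k - r)).image p :=
      image_congr fun v hv ↦ wrapMap_of_le (mem_Ioc.mp hv).2
    have right_block : (Ioc (k - r + k * e) (k * e + k)).image (wrapMap (k - r) (k * e) p f) =
        (Ioc (k - r) k).image p := by
      rw [Nat.add_comm (k * e) k, ← image_add_right_Ioc, image_image]
      exact image_congr fun v hv ↦ wrapMap_add_right (mem_Ioc.mp hv).1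
    rwa [image_union, left_block, right_block, ← image_union,
      Ioc_union_Ioc_eq_Ioc (Nat.zero_le _) (Nat.sub_le k r)]
  · have inner_edge : A.image (wrapMap (k - r) (k * e) p f ∘ (· + (k - r))) = A.image f :=
      image_congr fun v hv ↦ wrapMap_add_left (subset_of_mem_nestedMatching_edges hr hA hv)
    rw [image_image, inner_edge]
    exact (hfE A hA).1

end EmbedsInto

end NestedMatching

section Coloring

open Finset

variable {ι : Type*} [DecidableEq ι] {k : ℕ} {r : ι → ℕ}

theorem exists_coloring_forall_le_count [Nonempty ι] (hk : 1 ≤ k) (hr : ∀ i, r i ≤ k)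
    (s : Multiset ι) :
    ∀ a b, b < a + k * (1 + s.card) → ∃ c : Finset ℕ → ι, ∀ i n,
      (nestedMatching k (r i) n).EmbedsInto (inducedEdges (c ⁻¹' {i}) (Ioc a b)) →
        n ≤ s.count i := by
  induction s using Multiset.induction_on with
  | empty =>
    intro a b hab
    refine ⟨fun _ ↦ Classical.arbitrary ι, fun i n h ↦ ?_⟩
    cases n with
    | zero => exact Nat.zero_le _
    | succ n =>
      have k_le := le_card_of_nestedMatching_succ_embedsInto (hr i) h
      rw [Nat.card_Ioc] at k_le
      rw [Multiset.card_zero] at hab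
      omega
  | cons x s ih =>
    intro a b hab
    rw [Multiset.card_cons, ← Nat.add_assoc, Nat.mul_succ] at hab
    have k_le : k ≤ k * (1 + s.card) := Nat.le_mul_of_pos_right k (by omega)
    have hrx := hr x
    obtain ⟨c, hc⟩ := ih (a + (k - r x)) (b - r x) (by omega)
    refine ⟨fun A ↦ if A ⊆ Ioc (a + (k - r x)) (b - r x) then c A else x, fun i n h ↦ ?_⟩
    obtain rfl | hix := eq_or_ne i x
    · rw [Multiset.count_cons_self]
      cases n with
      | zero => exact Nat.zero_le _
      | succ n =>
        refine Nat.succ_le_succ (hc i n ((nestedMatching_embedsInto_inner_interval hrx h).mono ?_))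
        rintro A ⟨hAi, hA⟩
        exact ⟨(if_pos hA).symm.trans hAi, hA⟩
    · rw [Multiset.count_cons_of_ne hix]
      refine hc i n (h.mono ?_)
      rintro A ⟨hAi, -⟩
      have hA : A ⊆ Ioc (a + (k - r x)) (b - r x) :=
        not_imp_comm.mp (fun hA ↦ (if_neg hA).symm.trans hAi) hix.symm
      exact ⟨(if_pos hA).symm.trans hAi, hA⟩

theorem nestedMatching_count_cons_embedsInto {c : Finset ℕ → ι} {s : Multiset ι} {x : ι}
    {p : ℕ → ℕ} (hr : r x ≤ k) (hp : StrictMono p) (hx : c ((Ioc 0 k).image p) = x)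
    (h : ∀ i, (nestedMatching k (r i) (s.count i)).EmbedsInto
      (inducedEdges (c ⁻¹' {i}) (Ioo (p (k - r x)) (p (k - r x + 1))))) (i : ι) :
    (nestedMatching k (r i) ((x ::ₘ s).count i)).EmbedsInto
      (inducedEdges (c ⁻¹' {i}) (Ioo (p 0) (p (k + 1)))) := by
  have gap_subset : Ioo (p (k - r x)) (p (k - r x + 1)) ⊆ Ioo (p 0) (p (k + 1)) :=
    Ioo_subset_Ioo (hp.monotone (Nat.zero_le _)) (hp.monotone (by omega))
  have outer_subset : (Ioc 0 k).image p ⊆ Ioo (p 0) (p (k + 1)) :=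
    image_subset_iff.mpr fun j hj ↦ mem_Ioo.mpr
      ⟨hp (mem_Ioc.mp hj).1, hp (Nat.lt_succ_of_le (mem_Ioc.mp hj).2)⟩
  obtain rfl | hix := eq_or_ne i x
  · rw [Multiset.count_cons_self]
    exact nestedMatching_succ_embedsInto hr hp ⟨hx, outer_subset⟩
      ((h i).mono fun A ⟨hAi, hA⟩ ↦ ⟨⟨hAi, hA.trans gap_subset⟩, hA⟩)
  · rw [Multiset.count_cons_of_ne hix]
    exact (h i).mono fun A ⟨hAi, hA⟩ ↦ ⟨hAi, hA.trans gap_subset⟩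

theorem exists_forall_coloring_exists_count_embedsInto (hr : ∀ i, r i ≤ k) (m : ℕ) :
    ∃ M, 0 < M ∧ ∀ (c : Finset ℕ → ι) (a : ℕ), ∃ s : Multiset ι, s.card = m ∧ ∀ i,
      (nestedMatching k (r i) (s.count i)).EmbedsInto
        (inducedEdges (c ⁻¹' {i}) (Ioo a (a + M))) := by
  induction m with
  | zero => exact ⟨1, one_pos, fun c a ↦ ⟨0, rfl, fun i ↦ nestedMatching_zero_embedsInto⟩⟩
  | succ m ih =>
    obtain ⟨M, M_pos, hM⟩ := ih
    refine ⟨(k + 1) * M, Nat.mul_pos k.succ_pos M_pos, fun c a ↦ ?_⟩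
    let p : ℕ → ℕ := fun j ↦ a + j * M
    have hp : StrictMono p := fun i j hij ↦
      Nat.add_lt_add_left (Nat.mul_lt_mul_of_pos_right hij M_pos) a
    have p_zero : p 0 = a := by simp only [p, Nat.zero_mul, Nat.add_zero]
    have p_succ (j : ℕ) : p (j + 1) = p j + M := by simp only [p, Nat.succ_mul, Nat.add_assoc]
    obtain ⟨x, hx⟩ : ∃ x, c ((Ioc 0 k).image p) = x := ⟨_, rfl⟩
    obtain ⟨s, rfl, hs⟩ := hM c (p (k - r x))
    rw [← p_succ] at hs
    refine ⟨x ::ₘ s, Multiset.card_cons x s, fun i ↦ ?_⟩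
    have wrapped := nestedMatching_count_cons_embedsInto (hr x) hp hx hs i
    rwa [p_zero] at wrapped

end Coloring

section Ramsey

open Finset

variable {k t : ℕ} [Nonempty (Fin t)] {r : Fin t → ℕ}

theorem exists_forall_coloring_contains_nestedMatching (hr : ∀ i, r i ≤ k) (e : Fin t → ℕ) :
    ∃ N, ∀ c : Finset ℕ → Fin t, ∃ i,
      (coloredSubgraph k N c i).Contains (nestedMatching k (r i) (e i)) := by
  obtain ⟨M, -, hM⟩ := exists_forall_coloring_exists_count_embedsInto hr (∑ i, e i)
  refine ⟨M, fun c ↦ ?_⟩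
  obtain ⟨s, card_s, hs⟩ := hM c 0
  rw [Nat.zero_add] at hs
  obtain ⟨i, -, hi⟩ : ∃ i ∈ univ, e i ≤ s.count i := exists_le_of_sum_le univ_nonempty
    (card_s ▸ Multiset.sum_count_eq_card fun i _ ↦ mem_univ i).ge
  exact ⟨i, (contains_nestedMatching_iff (hr i)).mpr (nestedMatching_embedsInto_of_le (hr i) hi
    ((hs i).mono fun A hA ↦ ⟨hA.1, hA.2.trans Ioo_subset_Ioc_self⟩))⟩

theorem exists_coloring_forall_not_contains_nestedMatching (hk : 1 ≤ k) (hr : ∀ i, r i ≤ k)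
    {e : Fin t → ℕ} (he : ∀ i, 1 ≤ e i) {N : ℕ} (hN : N < k * (1 + ∑ i, (e i - 1))) :
    ∃ c : Finset ℕ → Fin t, ∀ i,
      ¬(coloredSubgraph k N c i).Contains (nestedMatching k (r i) (e i)) := by
  let s : Multiset (Fin t) := ∑ i, Multiset.replicate (e i - 1) i
  have card_s : s.card = ∑ i, (e i - 1) := by simp [s]
  have count_s (i : Fin t) : s.count i = e i - 1 := by
    simp [s, Multiset.count_sum', Multiset.count_replicate]
  obtain ⟨c, hc⟩ := exists_coloring_forall_le_count hk hr s 0 N (by rwa [Nat.zero_add, card_s])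
  refine ⟨c, fun i hi ↦ ?_⟩
  have e_le : e i ≤ e i - 1 :=
    count_s i ▸ hc i (e i) ((contains_nestedMatching_iff (hr i)).mp hi)
  have e_pos := he i
  omega

end Ramsey

/-- For `k ≥ 1`, positive integers `e_1, …, e_t`, and
`r_1, …, r_t ∈ {0, …, k}`,
`OR(M_{e_1}^{k,r_1}, …, M_{e_t}^{k,r_t}) ≥ k(1 + Σ_i (e_i - 1))`. -/
theorem ordered_ramsey_nested_matchings_lower (k t : ℕ) (e r : Fin t → ℕ)
    (hk : 1 ≤ k) (ht : 1 ≤ t) (he : ∀ i, 1 ≤ e i) (hr : ∀ i, r i ≤ k) :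
    k * (1 + ∑ i, (e i - 1)) ≤ ORnum k (fun i => nestedMatching k (r i) (e i)) := by
  have : Nonempty (Fin t) := ⟨⟨0, ht⟩⟩
  refine le_csInf (exists_forall_coloring_contains_nestedMatching hr e) fun N hN ↦ ?_
  by_contra! hlt
  obtain ⟨c, hc⟩ := exists_coloring_forall_not_contains_nestedMatching hk hr he hlt
  obtain ⟨i, hi⟩ := hN c
  exact hc i hi
end
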